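/- Max-plus primal space fundamental solution representation of Riccati solutions (main theorem): Assume M is a symmetric n×n real matrix satisfying: γ²·I − Bᵀ(R_k(M))B is positive definite for all k ≥ 0, R(M) − M is positive definite, and MB(γ²·I − BᵀMB)⁻¹BᵀM is positive definite. Fix k ≥ 1 and suppose the auxiliary value function Ŝ_k(x,z) := (S_k ψ(·,z))(x) is finite and quadratic, Ŝ_k(x,z) = (1/2)[x;z]ᵀQ_k[x;z], with Q_k²² − M positive definite, and that the primal kernel S_k(x,y) := −sup_{z∈ℝⁿ} { (1/2)(z−y)ᵀM(z−y) − Ŝ_k(x,z) } is quadratic with symmetric Hessian Λ_k, i.e. S_k(x,y) = (1/2)[x;y]ᵀΛ_k[x;y]. Let P0 be a symmetric n×n matrix with P0 − M positive definite, γ²·I − Bᵀ(R_i(P0))B positive definite for all 0 ≤ i ≤ k−1, and Λ_k²² + P0 negative definite. Then R_k(P0) = Λ_k¹¹ − Λ_k¹²(P0 + Λ_k²²)⁻¹Λ_k²¹. -/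

import Mathlib

open Matrix

/-- The Riccati operator `R(P) = Φ + AᵀPA + AᵀPB(γ²I − BᵀPB)⁻¹BᵀPA`. -/
noncomputable def Ric {n m : ℕ} (A : Matrix (Fin n) (Fin n) ℝ) (B : Matrix (Fin n) (Fin m) ℝ)
    (Φ : Matrix (Fin n) (Fin n) ℝ) (γ : ℝ) (P : Matrix (Fin n) (Fin n) ℝ) :
    Matrix (Fin n) (Fin n) ℝ :=
  Φ + Aᵀ * P * A +
    Aᵀ * P * B * (γ ^ 2 • (1 : Matrix (Fin m) (Fin m) ℝ) - Bᵀ * P * B)⁻¹ * Bᵀ * P * A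

/-- The one-step dynamic programming evolution operator on extended-real-valued functions:
`(Sφ)(x) = sup_w {½xᵀΦx − (γ²/2)|w|² + φ(Ax+Bw)}`. -/
noncomputable def DP {n m : ℕ} (A : Matrix (Fin n) (Fin n) ℝ) (B : Matrix (Fin n) (Fin m) ℝ)
    (Φ : Matrix (Fin n) (Fin n) ℝ) (γ : ℝ) (φ : (Fin n → ℝ) → EReal) :
    (Fin n → ℝ) → EReal :=
  fun x => ⨆ w : Fin m → ℝ,
    (((1 / 2) * (x ⬝ᵥ Φ *ᵥ x) - γ ^ 2 / 2 * (w ⬝ᵥ w) : ℝ) : EReal) + φ (A *ᵥ x + B *ᵥ w)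

/-- The primal-space kernel `S_k(x,y) = −sup_z {½(z−y)ᵀM(z−y) − Ŝ_k(x,z)}` expressed via
the quadratic form `Ŝ_k(x,z) = ½[x;z]ᵀQ_k[x;z]`. -/
noncomputable def primalKernel {n : ℕ} (M : Matrix (Fin n) (Fin n) ℝ)
    (Q : Matrix (Fin n ⊕ Fin n) (Fin n ⊕ Fin n) ℝ) (x y : Fin n → ℝ) : ℝ :=
  -(⨆ z : Fin n → ℝ,
      (1 / 2) * ((z - y) ⬝ᵥ M *ᵥ (z - y)) -
        (1 / 2) * (Sum.elim x z ⬝ᵥ Q *ᵥ Sum.elim x z))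

/-!
A max-plus linear operator is determined on max-plus combinations of the functions
`ψ(·, z) = ½(· - z)ᵀM(· - z)` by its values on these functions. The iterate of `DP` is max-plus
linear, and semiconvex duality recovers `Ŝ_k` from the primal kernel as
`Ŝ_k(x, z) = sup_y {S_k(x, y) + ψ(y, z)}`; hence `S_k` is the kernel of `DP^[k]` on such
combinations. When `P₀ - M` is positive semidefinite, `½uᵀP₀u` is one of them, so
`½xᵀR_k(P₀)x = sup_y {½[x;y]ᵀΛ[x;y] + ½yᵀP₀y}`, and this supremum is given by a Schur complement.
-/

theorem isSymm_of_posSemidef_sub {ι : Type*} {P P' : Matrix ι ι ℝ} (hP' : P'.IsSymm)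
    (h : (P - P').PosSemidef) : P.IsSymm := by
  simpa only [sub_add_cancel] using (isHermitian_iff_isSymm.1 h.isHermitian).add hP'

/-- The function `x ↦ ½xᵀPx`, i.e. the quadratic form with Hessian `P` when `P` is symmetric. -/
noncomputable def halfQuadForm {ι : Type*} [Fintype ι] (P : Matrix ι ι ℝ) (x : ι → ℝ) : ℝ :=
  (1 / 2) * (x ⬝ᵥ P *ᵥ x)

section QuadraticForms

variable {ι κ : Type*} [Fintype ι] [Fintype κ]

theorem dotProduct_mulVec_comm_of_isSymm {P : Matrix ι ι ℝ} (hP : P.IsSymm) (u v : ι → ℝ) :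
    u ⬝ᵥ P *ᵥ v = v ⬝ᵥ P *ᵥ u := by
  rw [← dotProduct_transpose_mulVec, hP.eq]

theorem halfQuadForm_add {P : Matrix ι ι ℝ} (hP : P.IsSymm) (u v : ι → ℝ) :
    halfQuadForm P (u + v) = halfQuadForm P u + v ⬝ᵥ P *ᵥ u + halfQuadForm P v := by
  simp only [halfQuadForm, mulVec_add, dotProduct_add, add_dotProduct,
    dotProduct_mulVec_comm_of_isSymm hP u v]
  ring

theorem halfQuadForm_sub_comm (P : Matrix ι ι ℝ) (u v : ι → ℝ) :
    halfQuadForm P (u - v) = halfQuadForm P (v - u) := by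
  rw [← neg_sub v u, halfQuadForm, mulVec_neg, neg_dotProduct_neg, halfQuadForm]

theorem halfQuadForm_neg_matrix (P : Matrix ι ι ℝ) (u : ι → ℝ) :
    halfQuadForm (-P) u = -halfQuadForm P u := by
  simp only [halfQuadForm, neg_mulVec, dotProduct_neg, mul_neg]

theorem halfQuadForm_add_matrix (P P' : Matrix ι ι ℝ) (u : ι → ℝ) :
    halfQuadForm (P + P') u = halfQuadForm P u + halfQuadForm P' u := by
  simp only [halfQuadForm, add_mulVec, dotProduct_add, mul_add]

theorem halfQuadForm_sub_matrix (P P' : Matrix ι ι ℝ) (u : ι → ℝ) :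
    halfQuadForm (P - P') u = halfQuadForm P u - halfQuadForm P' u := by
  simp only [halfQuadForm, sub_mulVec, dotProduct_sub, mul_sub]

theorem halfQuadForm_nonneg {P : Matrix ι ι ℝ} (hP : P.PosSemidef) (u : ι → ℝ) :
    0 ≤ halfQuadForm P u := by
  have := hP.dotProduct_mulVec_nonneg u
  rw [star_trivial] at this
  exact mul_nonneg (by norm_num) this

theorem halfQuadForm_pos {P : Matrix ι ι ℝ} (hP : P.PosDef) {u : ι → ℝ} (hu : u ≠ 0) :
    0 < halfQuadForm P u := by
  have := hP.dotProduct_mulVec_pos hu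
  rw [star_trivial] at this
  exact mul_pos (by norm_num) this

theorem eq_of_halfQuadForm_eq {P P' : Matrix ι ι ℝ} (hP : P.IsSymm) (hP' : P'.IsSymm)
    (h : ∀ u, halfQuadForm P u = halfQuadForm P' u) : P = P' := by
  classical
  have bilin (u v : ι → ℝ) : u ⬝ᵥ P *ᵥ v = u ⬝ᵥ P' *ᵥ v := by
    have hadd := h (v + u)
    rw [halfQuadForm_add hP, halfQuadForm_add hP', h u, h v] at hadd
    linarith
  ext i j
  simpa using bilin (Pi.single i 1) (Pi.single j 1)

theorem halfQuadForm_fromBlocks_transpose (A : Matrix ι ι ℝ) (B : Matrix ι κ ℝ)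
    (D : Matrix κ κ ℝ) (x : ι → ℝ) (y : κ → ℝ) :
    halfQuadForm (fromBlocks A B Bᵀ D) (Sum.elim x y) =
      halfQuadForm A x + x ⬝ᵥ B *ᵥ y + halfQuadForm D y := by
  simp only [halfQuadForm, fromBlocks_mulVec, sumElim_dotProduct_sumElim, Sum.elim_comp_inl,
    Sum.elim_comp_inr, dotProduct_add, dotProduct_transpose_mulVec]
  ring

theorem halfQuadForm_sumElim {H : Matrix (ι ⊕ κ) (ι ⊕ κ) ℝ} (hH : H.IsSymm)
    (x : ι → ℝ) (y : κ → ℝ) :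
    halfQuadForm H (Sum.elim x y) =
      halfQuadForm H.toBlocks₁₁ x + x ⬝ᵥ H.toBlocks₁₂ *ᵥ y + halfQuadForm H.toBlocks₂₂ y := by
  have hH21 : H.toBlocks₁₂ᵀ = H.toBlocks₂₁ := congrArg toBlocks₂₁ hH
  rw [← halfQuadForm_fromBlocks_transpose, hH21, fromBlocks_toBlocks]

variable [DecidableEq κ]

theorem halfQuadForm_fromBlocks_eq_schurComplement_add (A : Matrix ι ι ℝ) (B : Matrix ι κ ℝ)
    {D : Matrix κ κ ℝ} (hD : D.IsSymm) (hDunit : IsUnit D) (x : ι → ℝ) (y : κ → ℝ) :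
    halfQuadForm (fromBlocks A B Bᵀ D) (Sum.elim x y) =
      halfQuadForm (A - B * D⁻¹ * Bᵀ) x + halfQuadForm D ((D⁻¹ * Bᵀ) *ᵥ x + y) := by
  let _ := hDunit.invertible
  have schur := schur_complement_eq₂₂ A B x y (isHermitian_iff_isSymm.2 hD)
  simp only [star_trivial, conjTranspose_eq_transpose_of_trivial, ← dotProduct_mulVec] at schur
  simp only [halfQuadForm, schur]
  ring

theorem isGreatest_halfQuadForm_fromBlocks (A : Matrix ι ι ℝ) (B : Matrix ι κ ℝ)
    {D : Matrix κ κ ℝ} (hD : (-D).PosDef) (x : ι → ℝ) :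
    IsGreatest (Set.range fun y => halfQuadForm (fromBlocks A B Bᵀ D) (Sum.elim x y))
      (halfQuadForm (A - B * D⁻¹ * Bᵀ) x) := by
  have hDsymm : D.IsSymm := isSymm_neg_iff.1 (isHermitian_iff_isSymm.1 hD.isHermitian)
  have complete_square :=
    halfQuadForm_fromBlocks_eq_schurComplement_add A B hDsymm (IsUnit.neg_iff D |>.1 hD.isUnit) x
  refine ⟨⟨-((D⁻¹ * Bᵀ) *ᵥ x), ?_⟩, Set.forall_mem_range.2 fun y => ?_⟩
  · simp only [complete_square, add_neg_cancel]
    simp [halfQuadForm]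
  · have hneg := halfQuadForm_nonneg hD.posSemidef ((D⁻¹ * Bᵀ) *ᵥ x + y)
    rw [halfQuadForm_neg_matrix] at hneg
    simp only [complete_square]
    linarith

theorem isGreatest_halfQuadForm_sumElim_add {H : Matrix (ι ⊕ κ) (ι ⊕ κ) ℝ}
    (hH : H.IsSymm) {P : Matrix κ κ ℝ} (hneg : (-(H.toBlocks₂₂ + P)).PosDef)
    (x : ι → ℝ) :
    IsGreatest (Set.range fun y => halfQuadForm H (Sum.elim x y) + halfQuadForm P y)
      (halfQuadForm
        (H.toBlocks₁₁ - H.toBlocks₁₂ * (H.toBlocks₂₂ + P)⁻¹ * H.toBlocks₁₂ᵀ) x) := by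
  convert isGreatest_halfQuadForm_fromBlocks H.toBlocks₁₁ H.toBlocks₁₂ hneg x using 4 with y
  rw [halfQuadForm_sumElim hH, halfQuadForm_fromBlocks_transpose, halfQuadForm_add_matrix,
    add_assoc]

theorem nonsing_inv_neg {R : Type*} [CommRing R] (D : Matrix κ κ R) : (-D)⁻¹ = -D⁻¹ := by
  by_cases hD : IsUnit D.det
  · exact inv_eq_left_inv (by rw [neg_mul_neg, nonsing_inv_mul D hD])
  · have hD' : ¬IsUnit (-D).det := by
      rwa [← isUnit_iff_isUnit_det, IsUnit.neg_iff, isUnit_iff_isUnit_det]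
    rw [nonsing_inv_apply_not_isUnit _ hD, nonsing_inv_apply_not_isUnit _ hD', neg_zero]

end QuadraticForms

section ExtendedReals

variable {ι : Type*}

theorem iSup_coe_ereal_of_isGreatest {g : ι → ℝ} {c : ℝ} (h : IsGreatest (Set.range g) c) :
    ⨆ i, (g i : EReal) = c := by
  obtain ⟨i₀, hi₀⟩ := h.1
  refine le_antisymm (iSup_le fun i => EReal.coe_le_coe_iff.2 (h.2 ⟨i, rfl⟩)) ?_
  rw [← hi₀]
  exact le_iSup (fun i => (g i : EReal)) i₀

theorem coe_add_iSup_ereal (a : ℝ) (f : ι → EReal) :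
    (a : EReal) + ⨆ i, f i = ⨆ i, (a : EReal) + f i := by
  refine le_antisymm ?_ (iSup_le fun i => add_le_add_right (le_iSup f i) _)
  rw [add_comm, ← EReal.le_sub_iff_add_le (by simp) (by simp)]
  refine iSup_le fun i => ?_
  rw [EReal.le_sub_iff_add_le (by simp) (by simp), add_comm]
  exact le_iSup (fun i => (a : EReal) + f i) i

end ExtendedReals

section MaxPlusLinearity

variable {n m : ℕ} (A : Matrix (Fin n) (Fin n) ℝ) (B : Matrix (Fin n) (Fin m) ℝ)
  (Φ : Matrix (Fin n) (Fin n) ℝ) (γ : ℝ) {ι : Type*}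

theorem DP_iSup_const_add (c : ι → ℝ) (f : ι → (Fin n → ℝ) → EReal) :
    DP A B Φ γ (fun x => ⨆ i, (c i : EReal) + f i x) =
      fun x => ⨆ i, (c i : EReal) + DP A B Φ γ (f i) x := by
  funext x
  simp only [DP, coe_add_iSup_ereal]
  rw [iSup_comm]
  simp only [add_left_comm]

theorem DP_iterate_iSup_const_add (k : ℕ) (c : ι → ℝ) (f : ι → (Fin n → ℝ) → EReal) :
    (DP A B Φ γ)^[k] (fun x => ⨆ i, (c i : EReal) + f i x) =
      fun x => ⨆ i, (c i : EReal) + (DP A B Φ γ)^[k] (f i) x := by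
  induction k with
  | zero => rfl
  | succ k ih => simp only [Function.iterate_succ_apply', ih, DP_iSup_const_add]

variable {A B Φ γ}

theorem DP_iterate_eq_iSup_kernel_add {k : ℕ} {φ : (Fin n → ℝ) → ℝ} {c : ι → ℝ}
    {ψ : ι → (Fin n → ℝ) → ℝ} {K : (Fin n → ℝ) → (Fin n → ℝ) → ℝ}
    (hφ : ∀ u, (φ u : EReal) = ⨆ i, (c i : EReal) + ψ i u)
    (hψ : ∀ i x, (DP A B Φ γ)^[k] (fun u => (ψ i u : EReal)) x = ⨆ y, (K x y : EReal) + ψ i y)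
    (x : Fin n → ℝ) :
    (DP A B Φ γ)^[k] (fun u => (φ u : EReal)) x = ⨆ y, (K x y : EReal) + φ y := by
  calc (DP A B Φ γ)^[k] (fun u => (φ u : EReal)) x
      = ⨆ i, (c i : EReal) + (DP A B Φ γ)^[k] (fun u => (ψ i u : EReal)) x := by
        simp only [hφ, DP_iterate_iSup_const_add]
    _ = ⨆ i, ⨆ y, (c i : EReal) + ((K x y : EReal) + ψ i y) := by
        simp only [hψ, coe_add_iSup_ereal]
    _ = ⨆ y, ⨆ i, (K x y : EReal) + ((c i : EReal) + ψ i y) := by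
        rw [iSup_comm]
        simp only [add_left_comm]
    _ = ⨆ y, (K x y : EReal) + φ y := by
        simp only [hφ, coe_add_iSup_ereal]

end MaxPlusLinearity

section Riccati

variable {n m : ℕ} {A : Matrix (Fin n) (Fin n) ℝ} {B : Matrix (Fin n) (Fin m) ℝ}
  {Φ : Matrix (Fin n) (Fin n) ℝ} {γ : ℝ} {P : Matrix (Fin n) (Fin n) ℝ}

theorem Ric_isSymm (hΦ : Φ.IsSymm) (hP : P.IsSymm) : (Ric A B Φ γ P).IsSymm := by
  simp only [Matrix.IsSymm, Ric, transpose_add, transpose_mul, transpose_nonsing_inv,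
    transpose_sub, transpose_smul, transpose_one, transpose_transpose, hΦ.eq, hP.eq,
    Matrix.mul_assoc]

theorem Ric_iterate_isSymm (hΦ : Φ.IsSymm) (hP : P.IsSymm) (k : ℕ) :
    ((Ric A B Φ γ)^[k] P).IsSymm :=
  Function.Iterate.rec (fun P : Matrix (Fin n) (Fin n) ℝ => P.IsSymm) hP
    (fun _ => Ric_isSymm hΦ) k

theorem Ric_eq_schurComplement (hP : P.IsSymm) :
    Ric A B Φ γ P = (Φ + Aᵀ * P * A) -
      (Aᵀ * P * B) * (Bᵀ * P * B - γ ^ 2 • (1 : Matrix (Fin m) (Fin m) ℝ))⁻¹ *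
        (Aᵀ * P * B)ᵀ := by
  rw [← neg_sub (γ ^ 2 • (1 : Matrix (Fin m) (Fin m) ℝ)), nonsing_inv_neg]
  simp only [Ric, transpose_mul, transpose_transpose, hP.eq, Matrix.mul_neg, Matrix.neg_mul,
    sub_neg_eq_add, Matrix.mul_assoc]

theorem stageCost_add_halfQuadForm (hP : P.IsSymm) (x : Fin n → ℝ) (w : Fin m → ℝ) :
    (1 / 2) * (x ⬝ᵥ Φ *ᵥ x) - γ ^ 2 / 2 * (w ⬝ᵥ w) + halfQuadForm P (A *ᵥ x + B *ᵥ w) =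
      halfQuadForm (fromBlocks (Φ + Aᵀ * P * A) (Aᵀ * P * B) (Aᵀ * P * B)ᵀ
        (Bᵀ * P * B - γ ^ 2 • (1 : Matrix (Fin m) (Fin m) ℝ))) (Sum.elim x w) := by
  rw [halfQuadForm_fromBlocks_transpose, halfQuadForm_add hP]
  simp only [halfQuadForm, add_mulVec, sub_mulVec, smul_mulVec, one_mulVec, ← mulVec_mulVec,
    dotProduct_add, dotProduct_sub, dotProduct_smul, smul_eq_mul, dotProduct_transpose_mulVec]
  simp only [dotProduct_comm _ (A *ᵥ x), dotProduct_comm _ (B *ᵥ w),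
    dotProduct_mulVec_comm_of_isSymm hP (B *ᵥ w) (A *ᵥ x)]
  ring

theorem DP_halfQuadForm (hP : P.IsSymm)
    (hG : (γ ^ 2 • (1 : Matrix (Fin m) (Fin m) ℝ) - Bᵀ * P * B).PosDef) :
    DP A B Φ γ (fun x => (halfQuadForm P x : EReal)) =
      fun x => (halfQuadForm (Ric A B Φ γ P) x : EReal) := by
  funext x
  rw [← neg_sub] at hG
  simp only [DP, ← EReal.coe_add, stageCost_add_halfQuadForm hP, Ric_eq_schurComplement hP]
  exact iSup_coe_ereal_of_isGreatest (isGreatest_halfQuadForm_fromBlocks _ _ hG x)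

theorem DP_iterate_halfQuadForm (hΦ : Φ.IsSymm) (hP : P.IsSymm) (k : ℕ)
    (hG : ∀ i < k, (γ ^ 2 • (1 : Matrix (Fin m) (Fin m) ℝ) -
      Bᵀ * ((Ric A B Φ γ)^[i] P) * B).PosDef) :
    (DP A B Φ γ)^[k] (fun x => (halfQuadForm P x : EReal)) =
      fun x => (halfQuadForm ((Ric A B Φ γ)^[k] P) x : EReal) := by
  induction k with
  | zero => rfl
  | succ k ih =>
    rw [Function.iterate_succ_apply', Function.iterate_succ_apply',
      ih fun i hi => hG i (hi.trans k.lt_succ_self),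
      DP_halfQuadForm (Ric_iterate_isSymm hΦ hP k) (hG k k.lt_succ_self)]

end Riccati

section SemiconvexDuality

variable {ι κ : Type*} [Fintype ι] [Fintype κ] {M : Matrix ι ι ℝ}

theorem exists_isGreatest_const_add_halfQuadForm_sub (hM : M.IsSymm)
    (hMsurj : Function.Surjective M.mulVec) {P : Matrix ι ι ℝ} (hPM : (P - M).PosSemidef) :
    ∃ (c : (ι → ℝ) → ℝ) (ζ : (ι → ℝ) → ι → ℝ), ∀ u,
      IsGreatest (Set.range fun y => c y + halfQuadForm M (u - ζ y)) (halfQuadForm P u) := by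
  have hP : P.IsSymm := isSymm_of_posSemidef_sub hM hPM
  choose s hs using hMsurj
  -- With `ζ y = y - M⁻¹Py`, the gradients of `½uᵀPu` and `½(u - ζ y)ᵀM(u - ζ y)` agree at `u = y`.
  refine ⟨fun y => halfQuadForm P y - halfQuadForm M (s (P *ᵥ y)), fun y => y - s (P *ᵥ y),
    fun u => ⟨⟨u, by simp⟩, Set.forall_mem_range.2 fun y => ?_⟩⟩
  have gap_nonneg := halfQuadForm_nonneg hPM (u - y)
  have expand_P := halfQuadForm_add hP y (u - y)
  have expand_M := halfQuadForm_add hM (s (P *ᵥ y)) (u - y)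
  rw [halfQuadForm_sub_matrix] at gap_nonneg
  rw [add_sub_cancel] at expand_P
  rw [hs, show s (P *ᵥ y) + (u - y) = u - (y - s (P *ᵥ y)) by abel] at expand_M
  linarith

theorem isGreatest_halfQuadForm_sub_halfQuadForm_sumElim (hM : M.IsSymm)
    {Q : Matrix (κ ⊕ ι) (κ ⊕ ι) ℝ} (hQ : Q.IsSymm) (hQM : (Q.toBlocks₂₂ - M).PosSemidef)
    {x : κ → ℝ} {y z : ι → ℝ}
    (hz : M *ᵥ (z - y) = Q.toBlocks₁₂ᵀ *ᵥ x + Q.toBlocks₂₂ *ᵥ z) :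
    IsGreatest (Set.range fun z => halfQuadForm M (z - y) - halfQuadForm Q (Sum.elim x z))
      (halfQuadForm M (z - y) - halfQuadForm Q (Sum.elim x z)) := by
  refine ⟨⟨z, rfl⟩, Set.forall_mem_range.2 fun z' => ?_⟩
  have hQ22 : Q.toBlocks₂₂.IsSymm := congrArg toBlocks₂₂ hQ
  have gap_nonneg := halfQuadForm_nonneg hQM (z' - z)
  have expand_M := halfQuadForm_add hM (z - y) (z' - z)
  have expand_Q := halfQuadForm_add hQ22 z (z' - z)
  rw [halfQuadForm_sub_matrix] at gap_nonneg
  rw [hz, dotProduct_add, dotProduct_transpose_mulVec, mulVec_sub, dotProduct_sub,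
    show z - y + (z' - z) = z' - y by abel] at expand_M
  rw [add_sub_cancel] at expand_Q
  rw [halfQuadForm_sumElim hQ, halfQuadForm_sumElim hQ]
  linarith

end SemiconvexDuality

section PrimalKernel

variable {n : ℕ} {M : Matrix (Fin n) (Fin n) ℝ} {Q : Matrix (Fin n ⊕ Fin n) (Fin n ⊕ Fin n) ℝ}

theorem primalKernel_add_halfQuadForm_le (hM : M.IsSymm) (hQ : Q.IsSymm)
    (hQM : (Q.toBlocks₂₂ - M).PosDef) (x y z : Fin n → ℝ) :
    primalKernel M Q x y + halfQuadForm M (z - y) ≤ halfQuadForm Q (Sum.elim x z) := by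
  obtain ⟨z₀, hz₀⟩ := mulVec_surjective_iff_isUnit.2 hQM.isUnit
    (-(M *ᵥ y) - Q.toBlocks₁₂ᵀ *ᵥ x)
  have critical : M *ᵥ (z₀ - y) = Q.toBlocks₁₂ᵀ *ᵥ x + Q.toBlocks₂₂ *ᵥ z₀ := by
    rw [sub_mulVec] at hz₀
    rw [mulVec_sub, ← sub_eq_zero, ← sub_eq_zero.2 hz₀.symm]
    abel
  have greatest :=
    isGreatest_halfQuadForm_sub_halfQuadForm_sumElim hM hQ hQM.posSemidef critical
  have := le_ciSup ⟨_, greatest.2⟩ z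
  simp only [primalKernel, halfQuadForm] at this ⊢
  linarith

theorem isGreatest_primalKernel_add_halfQuadForm (hM : M.IsSymm) (hMunit : IsUnit M)
    (hQ : Q.IsSymm) (hQM : (Q.toBlocks₂₂ - M).PosDef) (x z : Fin n → ℝ) :
    IsGreatest (Set.range fun y => primalKernel M Q x y + halfQuadForm M (y - z))
      (halfQuadForm Q (Sum.elim x z)) := by
  simp only [halfQuadForm_sub_comm M _ z]
  refine ⟨?_, Set.forall_mem_range.2 fun y => primalKernel_add_halfQuadForm_le hM hQ hQM x y z⟩
  obtain ⟨y, hy⟩ := mulVec_surjective_iff_isUnit.2 hMunit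
    (M *ᵥ z - (Q.toBlocks₁₂ᵀ *ᵥ x + Q.toBlocks₂₂ *ᵥ z))
  have critical : M *ᵥ (z - y) = Q.toBlocks₁₂ᵀ *ᵥ x + Q.toBlocks₂₂ *ᵥ z := by
    rw [mulVec_sub, hy, sub_sub_cancel]
  have kernel_eq :
      primalKernel M Q x y = -(halfQuadForm M (z - y) - halfQuadForm Q (Sum.elim x z)) :=
    congrArg Neg.neg (isGreatest_halfQuadForm_sub_halfQuadForm_sumElim hM hQ hQM.posSemidef
      critical).csSup_eq
  refine ⟨y, ?_⟩
  simp only [kernel_eq]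
  ring

end PrimalKernel

section FundamentalSolution

variable {n m : ℕ} {A : Matrix (Fin n) (Fin n) ℝ} {B : Matrix (Fin n) (Fin m) ℝ}
  {Φ : Matrix (Fin n) (Fin n) ℝ} {γ : ℝ} {M : Matrix (Fin n) (Fin n) ℝ} {k : ℕ}
  {Q : Matrix (Fin n ⊕ Fin n) (Fin n ⊕ Fin n) ℝ}

-- If `Mv = 0`, then `ψ(·, v) = ψ(·, 0)`, so `vᵀQ²²v = 0 = vᵀMv`.
theorem isUnit_of_DP_iterate_eq_halfQuadForm (hM : M.IsSymm) (hQsymm : Q.IsSymm)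
    (hQ : ∀ x z, (DP A B Φ γ)^[k] (fun u => (halfQuadForm M (u - z) : EReal)) x =
      halfQuadForm Q (Sum.elim x z))
    (hQM : (Q.toBlocks₂₂ - M).PosDef) : IsUnit M := by
  rw [← mulVec_injective_iff_isUnit, ← coe_mulVecLin, injective_iff_map_eq_zero]
  intro v (hv : M *ᵥ v = 0)
  by_contra hv0
  have shift (u : Fin n → ℝ) : halfQuadForm M (u - v) = halfQuadForm M (u - 0) := by
    rw [sub_zero, sub_eq_add_neg, halfQuadForm_add hM]
    simp [halfQuadForm, mulVec_neg, hv, dotProduct_mulVec_comm_of_isSymm hM v]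
  have value_eq : halfQuadForm Q (Sum.elim 0 v) = halfQuadForm Q (Sum.elim 0 0) := by
    have := hQ 0 v
    simp only [shift, hQ] at this
    exact (EReal.coe_injective this).symm
  have gap_pos := halfQuadForm_pos hQM hv0
  rw [halfQuadForm_sub_matrix] at gap_pos
  rw [halfQuadForm_sumElim hQsymm, halfQuadForm_sumElim hQsymm] at value_eq
  simp only [halfQuadForm, hv, mulVec_zero, dotProduct_zero, zero_dotProduct] at value_eq gap_pos
  linarith

theorem DP_iterate_halfQuadForm_eq_iSup_primalKernel_add (hM : M.IsSymm) (hQsymm : Q.IsSymm)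
    (hQ : ∀ x z, (DP A B Φ γ)^[k] (fun u => (halfQuadForm M (u - z) : EReal)) x =
      halfQuadForm Q (Sum.elim x z))
    (hQM : (Q.toBlocks₂₂ - M).PosDef) {P : Matrix (Fin n) (Fin n) ℝ}
    (hPM : (P - M).PosSemidef) (x : Fin n → ℝ) :
    (DP A B Φ γ)^[k] (fun u => (halfQuadForm P u : EReal)) x =
      ⨆ y, (primalKernel M Q x y : EReal) + halfQuadForm P y := by
  have hMunit := isUnit_of_DP_iterate_eq_halfQuadForm hM hQsymm hQ hQM
  obtain ⟨c, ζ, hP_greatest⟩ := exists_isGreatest_const_add_halfQuadForm_sub hM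
    (mulVec_surjective_iff_isUnit.2 hMunit) hPM
  refine DP_iterate_eq_iSup_kernel_add (c := c) (ψ := fun y u => halfQuadForm M (u - ζ y))
    (fun u => ?_) (fun y x => ?_) x
  · simpa only [EReal.coe_add] using (iSup_coe_ereal_of_isGreatest (hP_greatest u)).symm
  · rw [hQ]
    simpa only [EReal.coe_add] using (iSup_coe_ereal_of_isGreatest
      (isGreatest_primalKernel_add_halfQuadForm hM hMunit hQsymm hQM x (ζ y))).symm

theorem primal_fundamental_solution_general (hΦ : Φ.IsSymm) (hM : M.IsSymm) (hQsymm : Q.IsSymm)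
    (hQ : ∀ x z, (DP A B Φ γ)^[k] (fun u => (halfQuadForm M (u - z) : EReal)) x =
      halfQuadForm Q (Sum.elim x z))
    (hQM : (Q.toBlocks₂₂ - M).PosDef)
    {Λ : Matrix (Fin n ⊕ Fin n) (Fin n ⊕ Fin n) ℝ} (hΛsymm : Λ.IsSymm)
    (hΛ : ∀ x y, primalKernel M Q x y = halfQuadForm Λ (Sum.elim x y))
    {P₀ : Matrix (Fin n) (Fin n) ℝ} (hP₀M : (P₀ - M).PosSemidef)
    (hP₀ : ∀ i < k, (γ ^ 2 • (1 : Matrix (Fin m) (Fin m) ℝ) -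
      Bᵀ * ((Ric A B Φ γ)^[i] P₀) * B).PosDef)
    (hneg : (-(Λ.toBlocks₂₂ + P₀)).PosDef) :
    (Ric A B Φ γ)^[k] P₀ =
      Λ.toBlocks₁₁ - Λ.toBlocks₁₂ * (P₀ + Λ.toBlocks₂₂)⁻¹ * Λ.toBlocks₂₁ := by
  have hP₀symm : P₀.IsSymm := isSymm_of_posSemidef_sub hM hP₀M
  have hΛ11 : Λ.toBlocks₁₁.IsSymm := congrArg toBlocks₁₁ hΛsymm
  have hΛ22 : Λ.toBlocks₂₂.IsSymm := congrArg toBlocks₂₂ hΛsymm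
  have hΛ21 : Λ.toBlocks₁₂ᵀ = Λ.toBlocks₂₁ := congrArg toBlocks₂₁ hΛsymm
  rw [add_comm P₀, ← hΛ21]
  refine eq_of_halfQuadForm_eq (Ric_iterate_isSymm hΦ hP₀symm k) ?_ fun x => ?_
  · exact hΛ11.sub (isHermitian_iff_isSymm.1 (isHermitian_mul_mul_conjTranspose _
      (isHermitian_iff_isSymm.2 (hΛ22.add hP₀symm).inv)))
  · refine EReal.coe_injective ?_
    calc (halfQuadForm ((Ric A B Φ γ)^[k] P₀) x : EReal)
        = (DP A B Φ γ)^[k] (fun u => (halfQuadForm P₀ u : EReal)) x :=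
          (congrFun (DP_iterate_halfQuadForm hΦ hP₀symm k hP₀) x).symm
      _ = ⨆ y, (primalKernel M Q x y : EReal) + halfQuadForm P₀ y :=
          DP_iterate_halfQuadForm_eq_iSup_primalKernel_add hM hQsymm hQ hQM hP₀M x
      _ = ⨆ y, ((halfQuadForm Λ (Sum.elim x y) + halfQuadForm P₀ y : ℝ) : EReal) := by
          simp only [hΛ, EReal.coe_add]
      _ = halfQuadForm
            (Λ.toBlocks₁₁ - Λ.toBlocks₁₂ * (Λ.toBlocks₂₂ + P₀)⁻¹ * Λ.toBlocks₁₂ᵀ) x :=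
          iSup_coe_ereal_of_isGreatest (isGreatest_halfQuadForm_sumElim_add hΛsymm hneg x)

end FundamentalSolution

/-- Max-plus primal space fundamental solution representation of Riccati solutions:
`R_k(P₀) = Λ_k¹¹ − Λ_k¹²(P₀ + Λ_k²²)⁻¹Λ_k²¹`. -/
theorem primal_fundamental_solution {n m : ℕ}
    (A : Matrix (Fin n) (Fin n) ℝ) (B : Matrix (Fin n) (Fin m) ℝ)
    (Φ : Matrix (Fin n) (Fin n) ℝ) (hΦsymm : Φ.IsSymm) (hΦ : Φ.PosDef)
    (γ : ℝ) (hγ : 0 < γ)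
    (M : Matrix (Fin n) (Fin n) ℝ) (hMsymm : M.IsSymm)
    (hM1 : ∀ k : ℕ,
      (γ ^ 2 • (1 : Matrix (Fin m) (Fin m) ℝ) - Bᵀ * ((Ric A B Φ γ)^[k] M) * B).PosDef)
    (hM2 : (Ric A B Φ γ M - M).PosDef)
    (hM3 : (M * B * (γ ^ 2 • (1 : Matrix (Fin m) (Fin m) ℝ) - Bᵀ * M * B)⁻¹ * Bᵀ * M).PosDef)
    (k : ℕ) (hk : 1 ≤ k)
    (Q : Matrix (Fin n ⊕ Fin n) (Fin n ⊕ Fin n) ℝ) (hQsymm : Q.IsSymm)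
    -- `Ŝ_k` is finite and quadratic with Hessian `Q_k`:
    (hQ : ∀ x z : Fin n → ℝ,
      (DP A B Φ γ)^[k]
          (fun x' => (((1 / 2) * ((x' - z) ⬝ᵥ M *ᵥ (x' - z)) : ℝ) : EReal)) x =
        (((1 / 2) * (Sum.elim x z ⬝ᵥ Q *ᵥ Sum.elim x z) : ℝ) : EReal))
    (hQ22 : (Q.toBlocks₂₂ - M).PosDef)
    (Λ : Matrix (Fin n ⊕ Fin n) (Fin n ⊕ Fin n) ℝ) (hΛsymm : Λ.IsSymm)
    -- the primal kernel `S_k` is quadratic with Hessian `Λ_k`: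
    (hΛ : ∀ x y : Fin n → ℝ,
      primalKernel M Q x y = (1 / 2) * (Sum.elim x y ⬝ᵥ Λ *ᵥ Sum.elim x y))
    (P₀ : Matrix (Fin n) (Fin n) ℝ) (hP₀symm : P₀.IsSymm) (hP₀M : (P₀ - M).PosDef)
    (hP₀ : ∀ i < k,
      (γ ^ 2 • (1 : Matrix (Fin m) (Fin m) ℝ) - Bᵀ * ((Ric A B Φ γ)^[i] P₀) * B).PosDef)
    (hneg : (-(Λ.toBlocks₂₂ + P₀)).PosDef) :
    (Ric A B Φ γ)^[k] P₀ =
      Λ.toBlocks₁₁ - Λ.toBlocks₁₂ * (P₀ + Λ.toBlocks₂₂)⁻¹ * Λ.toBlocks₂₁ :=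
  primal_fundamental_solution_general hΦsymm hMsymm hQsymm hQ hQ22 hΛsymm hΛ
    hP₀M.posSemidef hP₀ hneg
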